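/- arXiv:2006.08395 — 9 statements merged into one kernel-verified Lean document; each statement's English description precedes it below -/
import Mathlib

section
/- Let f ∈ ℝ[X] be a polynomial and F ∈ ℝ[Z,Y,X] a polynomial in three variables, and let H = H_{F,f} ∈ ℝ[X,A] be the associated polynomial. Then the following are equivalent: (a) the variable A divides H in ℝ[X,A], i.e. H = A·G for some G ∈ ℝ[X,A]; (b) for every nonzero infinitesimal α ∈ ℝ* and every real number x (embedded into ℝ*), the evaluation H(x,α) is infinitesimal. In other words, f is a hyper-solution of F on the standard reals if and only if H_{F,f} is divisible by A. -/
open MvPolynomial Hyperreal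

/-- The ring hom embedding `ℝ` into the hyperreals `ℝ*`. -/
noncomputable def realToHyper : ℝ →+* ℝ* where
  toFun r := (r : ℝ*)
  map_one' := Hyperreal.coe_one
  map_mul' := Hyperreal.coe_mul
  map_zero' := Hyperreal.coe_zero
  map_add' := Hyperreal.coe_add

/-- `f(X+A)` as an element of `K[X,A]` (variable `0` is `X`, variable `1` is `A`). -/
noncomputable def shiftPoly {K : Type*} [CommSemiring K] (f : Polynomial K) :
    MvPolynomial (Fin 2) K :=
  Polynomial.aeval (MvPolynomial.X 0 + MvPolynomial.X 1) f

/-- `f(X)` as an element of `K[X,A]` (variable `0` is `X`, variable `1` is `A`). -/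
noncomputable def injPoly {K : Type*} [CommSemiring K] (f : Polynomial K) :
    MvPolynomial (Fin 2) K :=
  Polynomial.aeval (MvPolynomial.X 0) f

/-- `Q` is the difference-quotient polynomial of `f`, i.e. `A·Q = f(X+A) − f(X)` in `K[X,A]`. -/
def IsDiffQuot {K : Type*} [CommRing K] (f : Polynomial K) (Q : MvPolynomial (Fin 2) K) : Prop :=
  MvPolynomial.X 1 * Q = shiftPoly f - injPoly f

/-- The associated polynomial `H_{F,f} ∈ K[X,A]` of `F ∈ K[Z,Y,X]` (variables `Z = 0`, `Y = 1`,
`X = 2`) and `f ∈ K[X]`, given the difference-quotient polynomial `Q` of `f`: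
substitute `Z := Q`, `Y := f(X)`, `X := X`. -/
noncomputable def Hpoly {K : Type*} [CommRing K] (F : MvPolynomial (Fin 3) K) (f : Polynomial K)
    (Q : MvPolynomial (Fin 2) K) : MvPolynomial (Fin 2) K :=
  MvPolynomial.aeval ![Q, injPoly f, MvPolynomial.X 0] F

lemma isSt_eval_aux (x : ℝ) (α : ℝ*) (hα : Infinitesimal α) (H : MvPolynomial (Fin 2) ℝ) :
    IsSt (MvPolynomial.eval₂ realToHyper ![(x : ℝ*), α] H) (MvPolynomial.eval ![x, 0] H) := by
  induction H using MvPolynomial.induction_on with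
  | C a =>
    rw [MvPolynomial.eval₂_C, MvPolynomial.eval_C]
    exact isSt_refl_real a
  | add p q hp hq =>
    rw [MvPolynomial.eval₂_add, map_add]
    exact hp.add hq
  | mul_X p i hp =>
    rw [MvPolynomial.eval₂_mul, map_mul, MvPolynomial.eval₂_X, MvPolynomial.eval_X]
    refine hp.mul ?_
    fin_cases i
    · exact isSt_refl_real x
    · exact hα

lemma dvd_sub_aux (H : MvPolynomial (Fin 2) ℝ) :
    (MvPolynomial.X 1 : MvPolynomial (Fin 2) ℝ) ∣
      H - MvPolynomial.aeval ![(MvPolynomial.X 0 : MvPolynomial (Fin 2) ℝ), 0] H := by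
  induction H using MvPolynomial.induction_on with
  | C a => simp [MvPolynomial.algebraMap_eq]
  | add p q hp hq =>
    rw [map_add, add_sub_add_comm]
    exact dvd_add hp hq
  | mul_X p i hp =>
    rw [map_mul, MvPolynomial.aeval_X]
    fin_cases i
    · simpa [← sub_mul] using hp.mul_right (MvPolynomial.X 0)
    · simp

/-- `f` is a hyper-solution of `F` on the standard reals iff `A` divides
`H_{F,f}` in `ℝ[X,A]`. -/
theorem stmt_0 (f : Polynomial ℝ) (F : MvPolynomial (Fin 3) ℝ) (Q : MvPolynomial (Fin 2) ℝ)
    (hQ : IsDiffQuot f Q) :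
    (MvPolynomial.X 1 ∣ Hpoly F f Q) ↔
      ∀ (α : ℝ*) (x : ℝ), α ≠ 0 → Infinitesimal α →
        Infinitesimal (MvPolynomial.eval₂ realToHyper ![(x : ℝ*), α] (Hpoly F f Q)) := by
  have key : ∀ (α : ℝ*) (x : ℝ), Infinitesimal α →
      (Infinitesimal (MvPolynomial.eval₂ realToHyper ![(x : ℝ*), α] (Hpoly F f Q)) ↔
        MvPolynomial.eval ![x, 0] (Hpoly F f Q) = 0) := by
    intro α x hα
    have h := isSt_eval_aux x α hα (Hpoly F f Q)
    constructor
    · intro h0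
      exact h.unique h0
    · intro h0
      rw [h0] at h
      exact h
  generalize Hpoly F f Q = H at key ⊢
  constructor
  · rintro ⟨G, rfl⟩ α x _ hα
    rw [key α x hα]
    simp
  · intro h
    have h0 : MvPolynomial.aeval ![(MvPolynomial.X 0 : MvPolynomial (Fin 2) ℝ), 0] H = 0 := by
      apply MvPolynomial.funext
      intro y
      have h1 := (key ε (y 0) infinitesimal_epsilon).1
        (h ε (y 0) epsilon_ne_zero infinitesimal_epsilon)
      rw [map_zero, ← h1]
      rw [← MvPolynomial.coe_aeval_eq_eval, RingHom.coe_coe, ← AlgHom.comp_apply,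
        MvPolynomial.comp_aeval, ← MvPolynomial.coe_aeval_eq_eval, RingHom.coe_coe]
      congr 2
      funext i
      fin_cases i <;> simp
    have h2 := dvd_sub_aux H
    rwa [h0, sub_zero] at h2
end

section
/- Let f ∈ ℝ[X] and F ∈ ℝ[Z,Y,X], and suppose the associated polynomial has the hyper Taylor form H_{F,f} = r·X^n + A·G with r ∈ ℝ, r ≠ 0, an integer n ≥ 1, and G ∈ ℝ[X,A] whose degree in X is smaller than n. Then for every nonzero infinitesimal α ∈ ℝ* and every hyperreal x ∈ ℝ*, the equation H_{F,f}(x,α) = 0 implies that x is infinitesimal. -/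
open MvPolynomial Hyperreal

theorem not_infinite_pow_aux {x : ℝ*} (hx : ¬Infinite x) (k : ℕ) : ¬Infinite (x ^ k) := by
  induction k with
  | zero => rw [pow_zero, ← Hyperreal.coe_one]; exact not_infinite_real 1
  | succ k ih => rw [pow_succ]; exact not_infinite_mul ih hx

theorem not_infinite_sum_aux {ι : Type*} (s : Finset ι) (g : ι → ℝ*)
    (h : ∀ i ∈ s, ¬Infinite (g i)) : ¬Infinite (∑ i ∈ s, g i) := by
  classical
  induction s using Finset.induction_on with
  | empty => simpa using not_infinite_zero
  | insert a s ha ih =>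
    rw [Finset.sum_insert ha]
    exact not_infinite_add (h a (Finset.mem_insert_self a s))
      (ih fun i hi => h i (Finset.mem_insert_of_mem hi))

/-- If `H_{F,f}` has the hyper Taylor form `r·X^n + A·G` with `r ≠ 0`,
`n ≥ 1` and `deg_X G < n`, then any hyperreal zero of `H_{F,f}(·,α)` (for `α` a nonzero
infinitesimal) is infinitesimal. -/
theorem stmt_1 (f : Polynomial ℝ) (F : MvPolynomial (Fin 3) ℝ) (Q : MvPolynomial (Fin 2) ℝ)
    (hQ : IsDiffQuot f Q) (r : ℝ) (n : ℕ) (G : MvPolynomial (Fin 2) ℝ)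
    (hr : r ≠ 0) (hn : 1 ≤ n) (hG : MvPolynomial.degreeOf 0 G < n)
    (hH : Hpoly F f Q = MvPolynomial.C r * MvPolynomial.X 0 ^ n + MvPolynomial.X 1 * G) :
    ∀ (α x : ℝ*), α ≠ 0 → Infinitesimal α →
      MvPolynomial.eval₂ realToHyper ![x, α] (Hpoly F f Q) = 0 → Infinitesimal x := by
  intro α x _ hα hz
  by_contra hx
  have hx0 : x ≠ 0 := by
    rintro rfl
    exact hx infinitesimal_zero
  have hxi : ¬Infinite x⁻¹ := fun h => hx ((infinitesimal_iff_infinite_inv hx0).2 h)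
  set g : ℝ* := MvPolynomial.eval₂ realToHyper ![x, α] G * (x⁻¹) ^ n with hg
  have hgfin : ¬Infinite g := by
    rw [hg, MvPolynomial.eval₂_eq', Finset.sum_mul]
    apply not_infinite_sum_aux
    intro d hd
    have hdn : d 0 < n := lt_of_le_of_lt (MvPolynomial.monomial_le_degreeOf 0 hd) hG
    have he : realToHyper (MvPolynomial.coeff d G) * (∏ i, (![x, α] : Fin 2 → ℝ*) i ^ d i)
        * x⁻¹ ^ n = realToHyper (MvPolynomial.coeff d G) * (α ^ d 1 * x⁻¹ ^ (n - d 0)) := by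
      rw [Fin.prod_univ_two]
      have h1 : x⁻¹ ^ n = x⁻¹ ^ (d 0) * x⁻¹ ^ (n - d 0) := by
        rw [← pow_add]; congr 1; omega
      have h2 : x ^ d 0 * x⁻¹ ^ d 0 = 1 := by
        rw [← mul_pow, mul_inv_cancel₀ hx0, one_pow]
      rw [h1]
      simp only [Matrix.cons_val_zero, Matrix.cons_val_one]
      linear_combination (realToHyper (MvPolynomial.coeff d G) * α ^ d 1 * x⁻¹ ^ (n - d 0)) * h2
    rw [he]
    exact not_infinite_mul (not_infinite_real _)
      (not_infinite_mul (not_infinite_pow_aux hα.not_infinite _) (not_infinite_pow_aux hxi _))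
  rw [hH] at hz
  simp only [MvPolynomial.eval₂_add, MvPolynomial.eval₂_mul, MvPolynomial.eval₂_pow,
    MvPolynomial.eval₂_C, MvPolynomial.eval₂_X, Matrix.cons_val_zero, Matrix.cons_val_one] at hz
  have h2 : x ^ n * x⁻¹ ^ n = 1 := by
    rw [← mul_pow, mul_inv_cancel₀ hx0, one_pow]
  have hreq : (r : ℝ*) = -(α * g) := by
    change (r : ℝ*) * x ^ n + _ = 0 at hz
    rw [hg]
    linear_combination x⁻¹ ^ n * hz - (r : ℝ*) * h2
  have hst : Infinitesimal (r : ℝ*) := by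
    rw [hreq]
    apply Infinitesimal.neg
    rw [infinitesimal_iff] at hα ⊢
    rw [infinite_iff, not_lt] at hgfin
    rw [ArchimedeanClass.mk_mul]
    exact lt_of_lt_of_le hα (le_add_of_nonneg_right hgfin)
  exact hr hst.eq_zero
end

section
/- Let f ∈ ℝ[X] and F ∈ ℝ[Z,Y,X], and suppose f is a hyper local approximation of F, i.e. H_{F,f} = P(X) + A·G with P ∈ ℝ[X] having zero constant coefficient and G ∈ ℝ[X,A] whose degree in X is smaller than the degree of P. Then for every infinitesimal x ∈ ℝ* and every nonzero infinitesimal α ∈ ℝ*, the evaluation H_{F,f}(x,α) is infinitesimal; that is, every hyper local approximation of F is a hyper-solution of F on the set of infinitesimal hyperreals. -/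
open MvPolynomial Hyperreal

lemma isSt_eval₂_realToHyper (x α : ℝ*) (hx : Infinitesimal x) (hα : Infinitesimal α)
    (p : MvPolynomial (Fin 2) ℝ) :
    IsSt (MvPolynomial.eval₂ realToHyper ![x, α] p) (MvPolynomial.eval (fun _ => (0 : ℝ)) p) := by
  induction p using MvPolynomial.induction_on with
  | C a =>
    rw [MvPolynomial.eval₂_C, MvPolynomial.eval_C]
    exact isSt_refl_real a
  | add p q hp hq =>
    rw [MvPolynomial.eval₂_add, map_add]
    exact hp.add hq
  | mul_X p i hp =>
    rw [MvPolynomial.eval₂_mul, map_mul, MvPolynomial.eval₂_X, MvPolynomial.eval_X]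
    refine hp.mul ?_
    fin_cases i
    · exact hx
    · exact hα

/-- Every hyper local approximation of `F` is a hyper-solution of `F` on the set
of infinitesimal hyperreals. -/
theorem stmt_4 (f : Polynomial ℝ) (F : MvPolynomial (Fin 3) ℝ) (Q : MvPolynomial (Fin 2) ℝ)
    (hQ : IsDiffQuot f Q) (P : Polynomial ℝ) (G : MvPolynomial (Fin 2) ℝ)
    (hP0 : P.coeff 0 = 0) (hG : MvPolynomial.degreeOf 0 G < P.natDegree)
    (hH : Hpoly F f Q = injPoly P + MvPolynomial.X 1 * G) :
    ∀ (x α : ℝ*), Infinitesimal x → α ≠ 0 → Infinitesimal α →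
      Infinitesimal (MvPolynomial.eval₂ realToHyper ![x, α] (Hpoly F f Q)) := by
  intro x α hx _ hα
  have h := isSt_eval₂_realToHyper x α hx hα (Hpoly F f Q)
  have h0 : MvPolynomial.eval (fun _ => (0 : ℝ)) (Hpoly F f Q) = 0 := by
    have h1 : MvPolynomial.eval (fun _ => (0 : ℝ)) (injPoly P) = P.eval 0 := by
      unfold injPoly
      rw [Polynomial.aeval_def, Polynomial.hom_eval₂, MvPolynomial.eval_X]
      have : (MvPolynomial.eval (fun _ : Fin 2 => (0 : ℝ))).comp
          (algebraMap ℝ (MvPolynomial (Fin 2) ℝ)) = RingHom.id ℝ := by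
        ext a
        simp [MvPolynomial.algebraMap_eq]
      rw [this, Polynomial.eval₂_id]
    rw [hH, map_add, map_mul, MvPolynomial.eval_X, zero_mul, add_zero, h1,
      ← Polynomial.coeff_zero_eq_eval_zero, hP0]
  rw [h0] at h
  exact h
end

section
/- The differential equation F(Z,Y,X) = X·Z − 1 is logarithm-like solvable. Precisely: fix x₀ ∈ ℂ with x₀ ≠ 0, let F₁ = (X+1)·Z − 1 and F_{x₀} = (X+x₀)·Z − 1 in ℂ[Z,Y,X], let f₁ ∈ ℂ[X], and define f̃ ∈ ℂ[X] by f̃(X) = f₁(x₀⁻¹·X). Then H_{F_{x₀},f̃}(X,A) = H_{F₁,f₁}(x₀⁻¹·X, x₀⁻¹·A). Consequently, if f₁ is a hyper Taylor approximation of F₁ with H_{F₁,f₁} = r·X^n + A·G (n ≥ 1, degree of G in X smaller than n), then f̃ is a hyper Taylor approximation of F_{x₀}, with H_{F_{x₀},f̃} = (r/x₀^n)·X^n + A·G̃ where G̃(X,A) = x₀⁻¹·G(x₀⁻¹·X, x₀⁻¹·A) has degree in X smaller than n. -/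
open MvPolynomial Hyperreal

/-- The algebra map `K[X,A] → K[X,A]` substituting `X ↦ c·X`, `A ↦ c·A`. -/
noncomputable def scaleVars {K : Type*} [CommSemiring K] (c : K) :
    MvPolynomial (Fin 2) K →ₐ[K] MvPolynomial (Fin 2) K :=
  MvPolynomial.aeval ![MvPolynomial.C c * MvPolynomial.X 0, MvPolynomial.C c * MvPolynomial.X 1]

theorem scaleVars_monomial_aux (c : ℂ) (m : Fin 2 →₀ ℕ) (a : ℂ) :
    scaleVars c (MvPolynomial.monomial m a) =
      MvPolynomial.monomial m (a * (c ^ m 0 * c ^ m 1)) := by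
  have h : ∀ b : ℂ, (MvPolynomial.monomial m b : MvPolynomial (Fin 2) ℂ) =
      MvPolynomial.C b * (MvPolynomial.X 0 ^ m 0 * MvPolynomial.X 1 ^ m 1) := by
    intro b
    rw [MvPolynomial.monomial_eq, Finsupp.prod_fintype _ _ (by simp), Fin.prod_univ_two]
  rw [h, h]
  simp only [scaleVars, map_mul, map_pow, MvPolynomial.aeval_X, MvPolynomial.aeval_C,
    MvPolynomial.algebraMap_eq, Matrix.cons_val_zero, Matrix.cons_val_one]
  ring

theorem scaleVars_degreeOf_aux (c : ℂ) (G : MvPolynomial (Fin 2) ℂ) (n : ℕ)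
    (h : MvPolynomial.degreeOf 0 G < n) :
    MvPolynomial.degreeOf 0 (scaleVars c G) < n := by
  have hn : 0 < n := by omega
  have key : ∀ m, MvPolynomial.coeff m (scaleVars c G) =
      (c ^ m 0 * c ^ m 1) * MvPolynomial.coeff m G := by
    intro m
    conv_lhs => rw [MvPolynomial.as_sum G]
    conv_rhs => rw [MvPolynomial.as_sum G]
    rw [map_sum, MvPolynomial.coeff_sum, MvPolynomial.coeff_sum, Finset.mul_sum]
    refine Finset.sum_congr rfl fun k _ => ?_
    rw [scaleVars_monomial_aux, MvPolynomial.coeff_monomial, MvPolynomial.coeff_monomial]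
    split_ifs with hk
    · subst hk; ring
    · simp
  rw [MvPolynomial.degreeOf_lt_iff hn] at h ⊢
  intro m hm
  apply h m
  rw [MvPolynomial.mem_support_iff, key] at hm
  rw [MvPolynomial.mem_support_iff]
  exact right_ne_zero_of_mul hm

/-- The differential equation `F = X·Z − 1` is logarithm-like solvable:
with `F₁ = (X+1)·Z − 1`, `F_{x₀} = (X+x₀)·Z − 1` and `f̃(X) = f₁(x₀⁻¹·X)`, one has
`H_{F_{x₀},f̃}(X,A) = H_{F₁,f₁}(x₀⁻¹X, x₀⁻¹A)`; consequently hyper Taylor approximations of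
`F₁` rescale to hyper Taylor approximations of `F_{x₀}`. -/
theorem stmt_5 (x₀ : ℂ) (hx₀ : x₀ ≠ 0) (f₁ : Polynomial ℂ) (Q₁ Qt : MvPolynomial (Fin 2) ℂ)
    (hQ₁ : IsDiffQuot f₁ Q₁)
    (hQt : IsDiffQuot (f₁.comp (Polynomial.C x₀⁻¹ * Polynomial.X)) Qt) :
    Hpoly ((MvPolynomial.X 2 + MvPolynomial.C x₀) * MvPolynomial.X 0 - 1)
        (f₁.comp (Polynomial.C x₀⁻¹ * Polynomial.X)) Qt =
      scaleVars x₀⁻¹ (Hpoly ((MvPolynomial.X 2 + 1) * MvPolynomial.X 0 - 1) f₁ Q₁) ∧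
    ∀ (r : ℂ) (n : ℕ) (G : MvPolynomial (Fin 2) ℂ), 1 ≤ n → MvPolynomial.degreeOf 0 G < n →
      Hpoly ((MvPolynomial.X 2 + 1) * MvPolynomial.X 0 - 1) f₁ Q₁ =
        MvPolynomial.C r * MvPolynomial.X 0 ^ n + MvPolynomial.X 1 * G →
      Hpoly ((MvPolynomial.X 2 + MvPolynomial.C x₀) * MvPolynomial.X 0 - 1)
          (f₁.comp (Polynomial.C x₀⁻¹ * Polynomial.X)) Qt =
        MvPolynomial.C (r / x₀ ^ n) * MvPolynomial.X 0 ^ n +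
          MvPolynomial.X 1 * (MvPolynomial.C x₀⁻¹ * scaleVars x₀⁻¹ G) ∧
      MvPolynomial.degreeOf 0 (MvPolynomial.C x₀⁻¹ * scaleVars x₀⁻¹ G) < n := by
  have hX0 : scaleVars x₀⁻¹ (MvPolynomial.X 0) = MvPolynomial.C x₀⁻¹ * MvPolynomial.X 0 := by
    simp [scaleVars]
  have hX1 : scaleVars x₀⁻¹ (MvPolynomial.X 1) = MvPolynomial.C x₀⁻¹ * MvPolynomial.X 1 := by
    simp [scaleVars]
  have hCr : ∀ r, scaleVars x₀⁻¹ (MvPolynomial.C r) = MvPolynomial.C r := by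
    intro r; simp [scaleVars, MvPolynomial.algebraMap_eq]
  have hC : (MvPolynomial.C x₀ * MvPolynomial.C x₀⁻¹ : MvPolynomial (Fin 2) ℂ) = 1 := by
    rw [← MvPolynomial.C_mul, mul_inv_cancel₀ hx₀, MvPolynomial.C_1]
  have hQ : Qt = MvPolynomial.C x₀⁻¹ * scaleVars x₀⁻¹ Q₁ := by
    have h1 := congrArg (scaleVars x₀⁻¹) hQ₁
    have hne : (MvPolynomial.X 1 : MvPolynomial (Fin 2) ℂ) ≠ 0 := MvPolynomial.X_ne_zero 1
    apply mul_left_cancel₀ hne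
    unfold IsDiffQuot at hQt
    rw [hQt]
    rw [map_mul, hX1, map_sub] at h1
    have e1 : shiftPoly (f₁.comp (Polynomial.C x₀⁻¹ * Polynomial.X)) =
        scaleVars x₀⁻¹ (shiftPoly f₁) := by
      simp only [shiftPoly]
      rw [← Polynomial.aeval_algHom_apply, Polynomial.aeval_comp, map_add, hX0, hX1]
      simp [mul_add, MvPolynomial.algebraMap_eq]
    have e2 : injPoly (f₁.comp (Polynomial.C x₀⁻¹ * Polynomial.X)) =
        scaleVars x₀⁻¹ (injPoly f₁) := by
      simp only [injPoly]
      rw [← Polynomial.aeval_algHom_apply, Polynomial.aeval_comp, hX0]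
      simp [MvPolynomial.algebraMap_eq]
    rw [e1, e2, ← h1]
    ring
  have main : Hpoly ((MvPolynomial.X 2 + MvPolynomial.C x₀) * MvPolynomial.X 0 - 1)
        (f₁.comp (Polynomial.C x₀⁻¹ * Polynomial.X)) Qt =
      scaleVars x₀⁻¹ (Hpoly ((MvPolynomial.X 2 + 1) * MvPolynomial.X 0 - 1) f₁ Q₁) := by
    have l : Hpoly ((MvPolynomial.X 2 + MvPolynomial.C x₀) * MvPolynomial.X 0 - 1)
        (f₁.comp (Polynomial.C x₀⁻¹ * Polynomial.X)) Qt =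
        (MvPolynomial.X 0 + MvPolynomial.C x₀) * Qt - 1 := by
      simp [Hpoly, MvPolynomial.algebraMap_eq]
    have r : Hpoly ((MvPolynomial.X 2 + 1) * MvPolynomial.X 0 - 1) f₁ Q₁ =
        (MvPolynomial.X 0 + 1) * Q₁ - 1 := by
      simp [Hpoly]
    rw [l, r, map_sub, map_mul, map_add, hX0, map_one, hQ]
    linear_combination (scaleVars x₀⁻¹ Q₁) * hC
  refine ⟨main, fun r n G hn hG hH => ⟨?_, ?_⟩⟩
  · rw [main, hH, map_add, map_mul, map_mul, map_pow, hX0, hX1, hCr, div_eq_mul_inv, ← inv_pow,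
      MvPolynomial.C_mul, MvPolynomial.C_pow]
    ring
  · have e : MvPolynomial.C x₀⁻¹ * scaleVars x₀⁻¹ G =
        scaleVars x₀⁻¹ (MvPolynomial.C x₀⁻¹ * G) := by
      rw [map_mul, hCr]
    rw [e]
    apply scaleVars_degreeOf_aux
    exact lt_of_le_of_lt (MvPolynomial.degreeOf_C_mul_le G 0 x₀⁻¹) hG
end

section
/- For every natural number m, the differential equation F(Z,Y,X) = X·Z + m·Y is logarithm-like solvable. Precisely: fix x₀ ∈ ℂ with x₀ ≠ 0, let F₁ = (X+1)·Z + m·Y and F_{x₀} = (X+x₀)·Z + m·Y in ℂ[Z,Y,X], let f₁ ∈ ℂ[X], and define f̃ ∈ ℂ[X] by f̃(X) = f₁(x₀⁻¹·X). Then H_{F_{x₀},f̃}(X,A) = H_{F₁,f₁}(x₀⁻¹·X, x₀⁻¹·A); consequently, if f₁ is a hyper Taylor approximation of F₁ with H_{F₁,f₁} = r·X^n + A·G (n ≥ 1, degree of G in X smaller than n), then f̃ is a hyper Taylor approximation of F_{x₀} with H_{F_{x₀},f̃} = (r/x₀^n)·X^n + A·G̃ where G̃(X,A) = x₀⁻¹·G(x₀⁻¹·X,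 x₀⁻¹·A) has degree in X smaller than n. -/
open MvPolynomial Hyperreal

theorem coeff_scaleVars_aux (c : ℂ) (p : MvPolynomial (Fin 2) ℂ) (d : Fin 2 →₀ ℕ) :
    MvPolynomial.coeff d (scaleVars c p) = c ^ (d 0 + d 1) * MvPolynomial.coeff d p := by
  induction p using MvPolynomial.induction_on' with
  | monomial u a =>
    have h : scaleVars c (MvPolynomial.monomial u a)
        = MvPolynomial.monomial u (c ^ (u 0 + u 1) * a) := by
      rw [scaleVars, MvPolynomial.aeval_monomial, MvPolynomial.monomial_eq,
        Finsupp.prod_fintype _ _ (by simp), Finsupp.prod_fintype _ _ (by simp)]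
      simp only [Fin.prod_univ_two, MvPolynomial.algebraMap_eq, Matrix.cons_val_zero,
        Matrix.cons_val_one, map_mul, map_pow]
      ring
    rw [h, MvPolynomial.coeff_monomial, MvPolynomial.coeff_monomial]
    split_ifs with hud
    · rw [hud]
    · simp
  | add p q hp hq => simp [hp, hq, mul_add]

theorem degreeOf_scaleVars_aux (c : ℂ) (p : MvPolynomial (Fin 2) ℂ) :
    MvPolynomial.degreeOf 0 (MvPolynomial.C c * scaleVars c p) ≤ MvPolynomial.degreeOf 0 p := by
  rw [MvPolynomial.degreeOf_le_iff]
  intro d hd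
  apply MvPolynomial.monomial_le_degreeOf
  rw [MvPolynomial.mem_support_iff] at hd ⊢
  intro h0
  apply hd
  rw [MvPolynomial.coeff_C_mul, coeff_scaleVars_aux, h0]
  simp

/-- For every natural number `m`, the differential equation `F = X·Z + m·Y`
is logarithm-like solvable: with `F₁ = (X+1)·Z + m·Y`, `F_{x₀} = (X+x₀)·Z + m·Y` and
`f̃(X) = f₁(x₀⁻¹·X)`, one has `H_{F_{x₀},f̃}(X,A) = H_{F₁,f₁}(x₀⁻¹X, x₀⁻¹A)`; consequently
hyper Taylor approximations of `F₁` rescale to hyper Taylor approximations of `F_{x₀}`. -/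
theorem stmt_6 (m : ℕ) (x₀ : ℂ) (hx₀ : x₀ ≠ 0) (f₁ : Polynomial ℂ)
    (Q₁ Qt : MvPolynomial (Fin 2) ℂ)
    (hQ₁ : IsDiffQuot f₁ Q₁)
    (hQt : IsDiffQuot (f₁.comp (Polynomial.C x₀⁻¹ * Polynomial.X)) Qt) :
    Hpoly ((MvPolynomial.X 2 + MvPolynomial.C x₀) * MvPolynomial.X 0 +
          MvPolynomial.C (m : ℂ) * MvPolynomial.X 1)
        (f₁.comp (Polynomial.C x₀⁻¹ * Polynomial.X)) Qt =
      scaleVars x₀⁻¹ (Hpoly ((MvPolynomial.X 2 + 1) * MvPolynomial.X 0 +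
          MvPolynomial.C (m : ℂ) * MvPolynomial.X 1) f₁ Q₁) ∧
    ∀ (r : ℂ) (n : ℕ) (G : MvPolynomial (Fin 2) ℂ), 1 ≤ n → MvPolynomial.degreeOf 0 G < n →
      Hpoly ((MvPolynomial.X 2 + 1) * MvPolynomial.X 0 +
          MvPolynomial.C (m : ℂ) * MvPolynomial.X 1) f₁ Q₁ =
        MvPolynomial.C r * MvPolynomial.X 0 ^ n + MvPolynomial.X 1 * G →
      Hpoly ((MvPolynomial.X 2 + MvPolynomial.C x₀) * MvPolynomial.X 0 +
            MvPolynomial.C (m : ℂ) * MvPolynomial.X 1)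
          (f₁.comp (Polynomial.C x₀⁻¹ * Polynomial.X)) Qt =
        MvPolynomial.C (r / x₀ ^ n) * MvPolynomial.X 0 ^ n +
          MvPolynomial.X 1 * (MvPolynomial.C x₀⁻¹ * scaleVars x₀⁻¹ G) ∧
      MvPolynomial.degreeOf 0 (MvPolynomial.C x₀⁻¹ * scaleVars x₀⁻¹ G) < n := by
  have hinj : injPoly (f₁.comp (Polynomial.C x₀⁻¹ * Polynomial.X))
      = scaleVars x₀⁻¹ (injPoly f₁) := by
    simp [injPoly, scaleVars, Polynomial.aeval_comp, ← Polynomial.aeval_algHom_apply,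
      MvPolynomial.algebraMap_eq]
  have hsh : shiftPoly (f₁.comp (Polynomial.C x₀⁻¹ * Polynomial.X))
      = scaleVars x₀⁻¹ (shiftPoly f₁) := by
    simp [shiftPoly, scaleVars, Polynomial.aeval_comp, ← Polynomial.aeval_algHom_apply,
      MvPolynomial.algebraMap_eq, mul_add]
  have s0 : scaleVars x₀⁻¹ (MvPolynomial.X 0) = MvPolynomial.C x₀⁻¹ * MvPolynomial.X 0 := by
    simp [scaleVars]
  have s1 : scaleVars x₀⁻¹ (MvPolynomial.X 1) = MvPolynomial.C x₀⁻¹ * MvPolynomial.X 1 := by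
    simp [scaleVars]
  have sC (a : ℂ) : scaleVars x₀⁻¹ (MvPolynomial.C a) = MvPolynomial.C a := by
    simp [scaleVars, MvPolynomial.algebraMap_eq]
  have hC : (MvPolynomial.C x₀ * MvPolynomial.C x₀⁻¹ : MvPolynomial (Fin 2) ℂ) = 1 := by
    rw [← MvPolynomial.C_mul, mul_inv_cancel₀ hx₀, MvPolynomial.C_1]
  have hQ : Qt = MvPolynomial.C x₀⁻¹ * scaleVars x₀⁻¹ Q₁ := by
    have h1 : MvPolynomial.X 1 * Qt
        = MvPolynomial.X 1 * (MvPolynomial.C x₀⁻¹ * scaleVars x₀⁻¹ Q₁) := by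
      unfold IsDiffQuot at hQ₁ hQt
      rw [hQt, hinj, hsh, ← map_sub, ← hQ₁, map_mul, s1]
      ring
    exact mul_left_cancel₀ (MvPolynomial.X_ne_zero 1) h1
  have main : Hpoly ((MvPolynomial.X 2 + MvPolynomial.C x₀) * MvPolynomial.X 0 +
          MvPolynomial.C (m : ℂ) * MvPolynomial.X 1)
        (f₁.comp (Polynomial.C x₀⁻¹ * Polynomial.X)) Qt =
      scaleVars x₀⁻¹ (Hpoly ((MvPolynomial.X 2 + 1) * MvPolynomial.X 0 +
          MvPolynomial.C (m : ℂ) * MvPolynomial.X 1) f₁ Q₁) := by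
    have e1 (Q P : MvPolynomial (Fin 2) ℂ) : ![Q, P, MvPolynomial.X 0] 2 = MvPolynomial.X 0 := rfl
    simp only [Hpoly, map_add, map_mul, map_one, MvPolynomial.aeval_X, MvPolynomial.aeval_C,
      MvPolynomial.algebraMap_eq, e1, Matrix.cons_val_zero, Matrix.cons_val_one, s0, sC, hinj, hQ]
    linear_combination (scaleVars x₀⁻¹ Q₁) * hC
  refine ⟨main, ?_⟩
  intro r n G hn hG hH
  refine ⟨?_, lt_of_le_of_lt (degreeOf_scaleVars_aux _ _) hG⟩
  rw [main, hH, map_add, map_mul, map_mul, map_pow, s0, s1, sC, div_eq_mul_inv, ← inv_pow,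
    MvPolynomial.C_mul, MvPolynomial.C_pow]
  ring
end

section
/- Hyper-solutions transport polynomial-like: let F ∈ ℂ[Z,Y,X], f ∈ ℂ[X], and x₀ ∈ ℂ. If A divides H_{F,f} in ℂ[X,A] (i.e. f is a hyper-solution of F), then A divides H_{F_{x₀},f_{x₀}} in ℂ[X,A], where F_{x₀}(Z,Y,X) := F(Z,Y,X+x₀) and f_{x₀}(X) := f(X+x₀); that is, f_{x₀} is a hyper-solution of the transported differential equation F_{x₀}. -/
open MvPolynomial Hyperreal

/-- The map `K[Z,Y,X] → K[Z,Y,X]` sending `F(Z,Y,X)` to `F_{x₀}(Z,Y,X) = F(Z,Y,X+x₀)`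
(variables `Z = 0`, `Y = 1`, `X = 2`). -/
noncomputable def atPoint {K : Type*} [CommSemiring K] (x₀ : K) (F : MvPolynomial (Fin 3) K) :
    MvPolynomial (Fin 3) K :=
  MvPolynomial.aeval
    ![MvPolynomial.X 0, MvPolynomial.X 1, MvPolynomial.X 2 + MvPolynomial.C x₀] F

/-- Hyper-solutions transport polynomial-like: if `A ∣ H_{F,f}`, then
`A ∣ H_{F_{x₀}, f_{x₀}}`, where `F_{x₀}(Z,Y,X) = F(Z,Y,X+x₀)` and `f_{x₀}(X) = f(X+x₀)`. -/
theorem stmt_7 (F : MvPolynomial (Fin 3) ℂ) (f : Polynomial ℂ) (x₀ : ℂ)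
    (Q Q' : MvPolynomial (Fin 2) ℂ) (hQ : IsDiffQuot f Q)
    (hQ' : IsDiffQuot (f.comp (Polynomial.X + Polynomial.C x₀)) Q')
    (hdvd : MvPolynomial.X 1 ∣ Hpoly F f Q) :
    MvPolynomial.X 1 ∣ Hpoly (atPoint x₀ F) (f.comp (Polynomial.X + Polynomial.C x₀)) Q' := by
  set φ : MvPolynomial (Fin 2) ℂ →ₐ[ℂ] MvPolynomial (Fin 2) ℂ :=
    MvPolynomial.aeval ![MvPolynomial.X 0 + MvPolynomial.C x₀, MvPolynomial.X 1] with hφ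
  have h0 : φ (MvPolynomial.X 0) = MvPolynomial.X 0 + MvPolynomial.C x₀ := by simp [hφ]
  have h1 : φ (MvPolynomial.X 1) = MvPolynomial.X 1 := by simp [hφ]
  have hinj : φ (injPoly f) = injPoly (f.comp (Polynomial.X + Polynomial.C x₀)) := by
    unfold injPoly
    rw [Polynomial.aeval_comp, ← Polynomial.aeval_algHom_apply, h0]
    simp [MvPolynomial.algebraMap_eq]
  have hsh : φ (shiftPoly f) = shiftPoly (f.comp (Polynomial.X + Polynomial.C x₀)) := by
    unfold shiftPoly
    rw [Polynomial.aeval_comp, ← Polynomial.aeval_algHom_apply, map_add, h0, h1]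
    simp [MvPolynomial.algebraMap_eq, add_right_comm]
  have hQQ : φ Q = Q' := by
    unfold IsDiffQuot at hQ hQ'
    have h := congrArg φ hQ
    rw [map_mul, map_sub, h1, hinj, hsh, ← hQ'] at h
    exact mul_left_cancel₀ (MvPolynomial.X_ne_zero 1) h
  have hH : φ (Hpoly F f Q) =
      Hpoly (atPoint x₀ F) (f.comp (Polynomial.X + Polynomial.C x₀)) Q' := by
    unfold Hpoly atPoint
    rw [← AlgHom.comp_apply, ← AlgHom.comp_apply]
    congr 1
    apply MvPolynomial.algHom_ext
    intro i
    fin_cases i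
    · simp [hQQ]
    · simp [hinj]
    · simp [h0, MvPolynomial.algebraMap_eq]
  have h := map_dvd φ hdvd
  rwa [h1, hH] at h
end

section
/- Let H ∈ ℝ[X,A] have the form H = r·X^n + A·G with r ∈ ℝ, r ≠ 0, an integer n ≥ 1, and G ∈ ℝ[X,A] whose degree in X is smaller than n. If x ∈ ℝ* is infinite and α ∈ ℝ* is infinitesimal, then the evaluation H(x,α) ≠ 0. -/
open MvPolynomial Hyperreal

/-- If `H = r·X^n + A·G` with `r ≠ 0`, `n ≥ 1`, `deg_X G < n`, and `x`
is infinite while `α` is infinitesimal, then `H(x,α) ≠ 0`. -/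
theorem stmt_11 (H G : MvPolynomial (Fin 2) ℝ) (r : ℝ) (n : ℕ) (hr : r ≠ 0) (hn : 1 ≤ n)
    (hG : MvPolynomial.degreeOf 0 G < n)
    (hH : H = MvPolynomial.C r * MvPolynomial.X 0 ^ n + MvPolynomial.X 1 * G)
    (x α : ℝ*) (hx : x.Infinite) (hα : Infinitesimal α) :
    MvPolynomial.eval₂ realToHyper ![x, α] H ≠ 0 := by
  have hx1 : (1 : ℝ*) < |x| := by
    have h := infinite_iff_abs_lt_abs.1 hx 1
    simpa using h
  have hd : ∀ δ : ℝ, 0 < δ → |α| < (δ : ℝ*) := by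
    intro δ hδ
    have h := isSt_iff_abs_sub_lt_delta.1 hα δ hδ
    simpa using h
  have hcoe : ∀ t : ℝ, realToHyper t = (t : ℝ*) := fun _ => rfl
  have hα1 : |α| ≤ 1 := by
    have h := hd 1 one_pos
    rw [Hyperreal.coe_one] at h
    exact h.le
  set C : ℝ := ∑ d ∈ G.support, |G.coeff d| with hC
  have hC0 : 0 ≤ C := Finset.sum_nonneg fun _ _ => abs_nonneg _
  have hGb : |MvPolynomial.eval₂ realToHyper ![x, α] G| ≤ (C : ℝ*) * |x| ^ n := by
    rw [MvPolynomial.eval₂_eq', ← hcoe, hC, map_sum, Finset.sum_mul]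
    refine (Finset.abs_sum_le_sum_abs _ _).trans (Finset.sum_le_sum fun d hdm => ?_)
    have hdn : d 0 ≤ n := (MvPolynomial.degreeOf_le_iff.1 hG.le) d hdm
    rw [abs_mul, hcoe, hcoe, Hyperreal.coe_abs]
    refine mul_le_mul_of_nonneg_left ?_ (abs_nonneg _)
    rw [Fin.prod_univ_two, abs_mul, abs_pow, abs_pow]
    calc |x| ^ d 0 * |α| ^ d 1 ≤ |x| ^ d 0 * 1 :=
          mul_le_mul_of_nonneg_left (pow_le_one₀ (abs_nonneg _) hα1)
            (pow_nonneg (abs_nonneg _) _)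
      _ ≤ |x| ^ n := by rw [mul_one]; exact pow_le_pow_right₀ hx1.le hdn
  have hxn : 0 < |x| ^ n := pow_pos (one_pos.trans hx1) n
  have hrpos : 0 < |r| := abs_pos.2 hr
  have hαC : |α| * (C : ℝ*) < |(r : ℝ*)| := by
    have h := hd (|r| / (C + 1)) (by positivity)
    have hC1 : (0 : ℝ*) < ((C + 1 : ℝ) : ℝ*) := Hyperreal.coe_pos.2 (by positivity)
    calc |α| * (C : ℝ*) ≤ |α| * ((C + 1 : ℝ) : ℝ*) :=
          mul_le_mul_of_nonneg_left (Hyperreal.coe_le_coe.2 (by linarith)) (abs_nonneg _)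
      _ < ((|r| / (C + 1) : ℝ) : ℝ*) * ((C + 1 : ℝ) : ℝ*) := mul_lt_mul_of_pos_right h hC1
      _ = |(r : ℝ*)| := by
          rw [← Hyperreal.coe_mul, div_mul_cancel₀ _ (by positivity), Hyperreal.coe_abs]
  intro h0
  rw [hH] at h0
  simp only [MvPolynomial.eval₂_add, MvPolynomial.eval₂_mul, MvPolynomial.eval₂_pow,
    MvPolynomial.eval₂_C, MvPolynomial.eval₂_X, hcoe, Matrix.cons_val_zero,
    Matrix.cons_val_one] at h0
  have h1 := eq_neg_of_add_eq_zero_left h0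
  have h2 := congrArg abs h1
  rw [abs_neg, abs_mul, abs_mul, abs_pow] at h2
  have h3 := mul_le_mul_of_nonneg_left hGb (abs_nonneg α)
  have h4 := mul_lt_mul_of_pos_right hαC hxn
  rw [← mul_assoc] at h3
  exact absurd h2 (ne_of_gt (h3.trans_lt h4))
end

section
/- Finiteness of the root set T_f(F): let f ∈ ℝ[X] and F ∈ ℝ[Z,Y,X] with H_{F,f} = r·X^n + A·G, where r ≠ 0, n ≥ 1, and the degree of G in X is smaller than n. Then for every nonzero infinitesimal α ∈ ℝ*, the set T = {β ∈ ℝ* : H_{F,f}(β,α) = 0} of hyperreal roots is finite with at most n elements, and every element of T is infinitesimal. -/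
open MvPolynomial Hyperreal

open Polynomial in
/-- The univariate polynomial `H(X, α)` of the second summand has small degree. -/
lemma aux_degree (G : MvPolynomial (Fin 2) ℝ) (n : ℕ) (hG : MvPolynomial.degreeOf 0 G < n) (α : ℝ*) :
    (MvPolynomial.eval₂ (Polynomial.C.comp realToHyper)
      ![(Polynomial.X : Polynomial ℝ*), Polynomial.C α] G).degree < n := by
  rw [MvPolynomial.eval₂_eq']
  refine (Polynomial.degree_sum_le _ _).trans_lt ?_
  refine (Finset.sup_lt_iff (WithBot.bot_lt_coe n)).2 ?_
  intro m hm
  have h1 : m 0 < n := (MvPolynomial.degreeOf_lt_iff (by omega)).1 hG m hm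
  simp only [Fin.prod_univ_two, RingHom.comp_apply, Matrix.cons_val_zero, Matrix.cons_val_one]
  rw [← mul_assoc, ← Polynomial.C_pow, mul_right_comm, ← Polynomial.C_mul]
  exact (Polynomial.degree_C_mul_X_pow_le _ _).trans_lt (WithBot.coe_lt_coe.2 h1)

open ArchimedeanClass in
/-- Dividing by `β ^ n` for a non-infinitesimal `β` leaves an infinitesimal. -/
lemma aux_inf (G : MvPolynomial (Fin 2) ℝ) (n : ℕ) (hG : MvPolynomial.degreeOf 0 G < n) (α β : ℝ*)
    (hα : 0 < ArchimedeanClass.mk α) (hβ0 : β ≠ 0) (hβ : 0 ≤ ArchimedeanClass.mk β⁻¹) :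
    0 < ArchimedeanClass.mk (α * MvPolynomial.eval₂ realToHyper ![β, α] G * β⁻¹ ^ n) := by
  have key : 0 ≤ ArchimedeanClass.mk (MvPolynomial.eval₂ realToHyper ![β, α] G * β⁻¹ ^ n) := by
    rw [MvPolynomial.eval₂_eq', Finset.sum_mul]
    refine Finset.sum_induction _ (fun x : ℝ* => 0 ≤ ArchimedeanClass.mk x) ?_ ?_ ?_
    · intro a b ha hb
      exact (le_min ha hb).trans (min_le_mk_add a b)
    · simp
    · intro m hm
      have h1 : m 0 < n := (MvPolynomial.degreeOf_lt_iff (by omega)).1 hG m hm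
      obtain ⟨k, rfl⟩ := Nat.exists_eq_add_of_lt h1
      simp only [Fin.prod_univ_two, Matrix.cons_val_zero, Matrix.cons_val_one]
      have e : realToHyper (MvPolynomial.coeff m G) * (β ^ m 0 * α ^ m 1) * β⁻¹ ^ (m 0 + k + 1)
          = realToHyper (MvPolynomial.coeff m G) * (α ^ m 1 * β⁻¹ ^ (k+1)) := by
        have : β ^ m 0 * β⁻¹ ^ m 0 = 1 := by rw [← mul_pow, mul_inv_cancel₀ hβ0, one_pow]
        rw [add_assoc, pow_add]
        linear_combination (realToHyper (MvPolynomial.coeff m G) * α ^ m 1 * β⁻¹ ^ (k+1)) * this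
      rw [e, mk_mul, mk_mul, mk_pow, mk_pow]
      exact add_nonneg (archimedeanClassMk_coe_nonneg _)
        (add_nonneg (nsmul_nonneg hα.le _) (nsmul_nonneg hβ _))
  rw [mul_assoc, mk_mul]
  exact add_pos_of_pos_of_nonneg hα key

/-- Finiteness of the root set `T_f(F)`: if `H_{F,f} = r·X^n + A·G` with
`r ≠ 0`, `n ≥ 1`, `deg_X G < n`, then for every nonzero infinitesimal `α` the set of
hyperreal roots `β` of `H_{F,f}(·,α)` is finite with at most `n` elements, and every root is
infinitesimal. -/
theorem stmt_12 (f : Polynomial ℝ) (F : MvPolynomial (Fin 3) ℝ) (Q : MvPolynomial (Fin 2) ℝ)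
    (hQ : IsDiffQuot f Q) (r : ℝ) (n : ℕ) (G : MvPolynomial (Fin 2) ℝ)
    (hr : r ≠ 0) (hn : 1 ≤ n) (hG : MvPolynomial.degreeOf 0 G < n)
    (hH : Hpoly F f Q = MvPolynomial.C r * MvPolynomial.X 0 ^ n + MvPolynomial.X 1 * G)
    (α : ℝ*) (hα0 : α ≠ 0) (hα : Infinitesimal α) :
    {β : ℝ* | MvPolynomial.eval₂ realToHyper ![β, α] (Hpoly F f Q) = 0}.Finite ∧
    {β : ℝ* | MvPolynomial.eval₂ realToHyper ![β, α] (Hpoly F f Q) = 0}.ncard ≤ n ∧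
    ∀ β ∈ {β : ℝ* | MvPolynomial.eval₂ realToHyper ![β, α] (Hpoly F f Q) = 0},
      Infinitesimal β := by
  have hev : ∀ β : ℝ*, MvPolynomial.eval₂ realToHyper ![β, α] (Hpoly F f Q) =
      realToHyper r * β ^ n + α * MvPolynomial.eval₂ realToHyper ![β, α] G := by
    intro β
    rw [hH]
    simp
  have hr' : realToHyper r ≠ 0 := Hyperreal.coe_ne_zero.2 hr
  set g : Polynomial ℝ* := MvPolynomial.eval₂ (Polynomial.C.comp realToHyper)
      ![(Polynomial.X : Polynomial ℝ*), Polynomial.C α] G with hg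
  have hgd : g.degree < n := aux_degree G n hG α
  have hge : ∀ β : ℝ*, g.eval β = MvPolynomial.eval₂ realToHyper ![β, α] G := by
    intro β
    rw [hg, MvPolynomial.eval₂_eq', MvPolynomial.eval₂_eq', Polynomial.eval_finset_sum]
    simp [Fin.prod_univ_two]
  set P : Polynomial ℝ* := Polynomial.C (realToHyper r) * Polynomial.X ^ n + Polynomial.C α * g
    with hP
  have hPd : P.degree = n := by
    have h1 : (Polynomial.C (realToHyper r) * Polynomial.X ^ n : Polynomial ℝ*).degree =
        (n : WithBot ℕ) :=
      Polynomial.degree_C_mul_X_pow n hr'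
    rw [hP, Polynomial.degree_add_eq_left_of_degree_lt, h1]
    rw [h1, Polynomial.degree_C_mul hα0]
    exact hgd
  have hP0 : P ≠ 0 := by
    intro h
    rw [h] at hPd
    simp at hPd
  have hS : {β : ℝ* | MvPolynomial.eval₂ realToHyper ![β, α] (Hpoly F f Q) = 0}
      = (P.roots.toFinset : Set ℝ*) := by
    ext β
    rw [Finset.mem_coe, Multiset.mem_toFinset, Polynomial.mem_roots hP0]
    simp [hev, hP, hge]
  refine ⟨?_, ?_, ?_⟩
  · rw [hS]
    exact Finset.finite_toSet _
  · rw [hS, Set.ncard_coe_finset]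
    refine (Multiset.toFinset_card_le _).trans ((Polynomial.card_roots' P).trans ?_)
    exact (Polynomial.natDegree_eq_of_degree_eq_some hPd).le
  · intro β hβ
    rw [Set.mem_setOf_eq, hev] at hβ
    rw [infinitesimal_iff] at hα ⊢
    by_contra hcon
    have hβ0 : β ≠ 0 := by
      rintro rfl
      simp at hcon
    have hβi : 0 ≤ ArchimedeanClass.mk β⁻¹ := by
      rw [ArchimedeanClass.mk_inv]
      have h2 : ArchimedeanClass.mk β + -ArchimedeanClass.mk β = 0 := by
        rw [← ArchimedeanClass.mk_inv, ← ArchimedeanClass.mk_mul, mul_inv_cancel₀ hβ0,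
          ArchimedeanClass.mk_one]
      rw [← h2]
      exact (add_le_add_left (not_lt.1 hcon) _).trans (zero_add _).le
    have h3 := aux_inf G n hG α β hα hβ0 hβi
    have h4 : α * MvPolynomial.eval₂ realToHyper ![β, α] G * β⁻¹ ^ n = -realToHyper r := by
      have : β ^ n * β⁻¹ ^ n = 1 := by rw [← mul_pow, mul_inv_cancel₀ hβ0, one_pow]
      linear_combination β⁻¹ ^ n * hβ - realToHyper r * this
    rw [h4, ArchimedeanClass.mk_neg] at h3
    exact h3.ne' (archimdeanClassMk_coe hr)
end

section
/- For every polynomial f ∈ ℝ[X], every finite hyperreal x ∈ ℝ*, and every nonzero infinitesimal α ∈ ℝ*, the difference quotient (f(x+α) − f(x))/α differs from the evaluation of the formal derivative f' at x by an infinitesimal; equivalently, Q_f(x,α) − f'(x) is infinitesimal, where Q_f is the difference-quotient polynomial of f and f' is the formal (polynomial) derivative of f. -/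
open MvPolynomial Hyperreal

/-- The finite hyperreals form a subring. -/
noncomputable def finiteHyper : Subring ℝ* where
  carrier := {y | ¬ y.Infinite}
  mul_mem' := fun ha hb => Hyperreal.not_infinite_mul ha hb
  one_mem' := Hyperreal.coe_one ▸ Hyperreal.not_infinite_real 1
  add_mem' := fun ha hb => Hyperreal.not_infinite_add ha hb
  zero_mem' := Hyperreal.not_infinite_zero
  neg_mem' := fun ha => Hyperreal.not_infinite_neg ha

/-- The real embedding lands in the finite hyperreals. -/
noncomputable def realToFinite : ℝ →+* finiteHyper :=
  realToHyper.codRestrict finiteHyper (fun r => Hyperreal.not_infinite_real r)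

theorem eval₂_finite (f : Polynomial ℝ) (y : finiteHyper) :
    (((f.map realToFinite).eval y : finiteHyper) : ℝ*) = Polynomial.eval₂ realToHyper (y : ℝ*) f := by
  rw [Polynomial.eval_map]
  exact Polynomial.hom_eval₂ f realToFinite finiteHyper.subtype y

theorem taylor_finite (f : Polynomial ℝ) (x α : ℝ*) (hx : ¬ x.Infinite) (hα : ¬ α.Infinite) :
    ∃ k : ℝ*, ¬ k.Infinite ∧ Polynomial.eval₂ realToHyper (x + α) f =
      Polynomial.eval₂ realToHyper x f
        + Polynomial.eval₂ realToHyper x (Polynomial.derivative f) * α + k * α ^ 2 := by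
  obtain ⟨k, hk⟩ := Polynomial.binomExpansion (f.map realToFinite) ⟨x, hx⟩ ⟨α, hα⟩
  refine ⟨k, k.2, ?_⟩
  have h := congrArg (Subtype.val) hk
  rw [Polynomial.derivative_map] at h
  simpa only [Subring.coe_add, Subring.coe_mul, Subring.coe_pow, eval₂_finite] using h

/-- For every `f ∈ ℝ[X]`, finite `x ∈ ℝ*` and nonzero infinitesimal
`α ∈ ℝ*`, the difference quotient `(f(x+α) − f(x))/α` differs from the formal derivative
`f'(x)` by an infinitesimal; equivalently `Q_f(x,α) − f'(x)` is infinitesimal. -/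
theorem stmt_13 (f : Polynomial ℝ) (Q : MvPolynomial (Fin 2) ℝ) (hQ : IsDiffQuot f Q)
    (x α : ℝ*) (hx : ¬ x.Infinite) (hα0 : α ≠ 0) (hα : Infinitesimal α) :
    Infinitesimal ((Polynomial.eval₂ realToHyper (x + α) f - Polynomial.eval₂ realToHyper x f) / α
      - Polynomial.eval₂ realToHyper x (Polynomial.derivative f)) ∧
    Infinitesimal (MvPolynomial.eval₂ realToHyper ![x, α] Q
      - Polynomial.eval₂ realToHyper x (Polynomial.derivative f)) := by
  obtain ⟨k, hk, h⟩ := taylor_finite f x α hx hα.not_infinite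
  have hq : (Polynomial.eval₂ realToHyper (x + α) f - Polynomial.eval₂ realToHyper x f) / α
      = MvPolynomial.eval₂ realToHyper ![x, α] Q := by
    have h1 := congrArg (MvPolynomial.eval₂Hom realToHyper ![x, α]) hQ
    have hc : (MvPolynomial.eval₂Hom realToHyper ![x, α]).comp
        (algebraMap ℝ (MvPolynomial (Fin 2) ℝ)) = realToHyper := by
      ext r; simp [MvPolynomial.algebraMap_eq]
    simp only [shiftPoly, injPoly, Polynomial.aeval_def, map_mul, map_sub,
      Polynomial.hom_eval₂, hc, map_add] at h1
    simp only [MvPolynomial.coe_eval₂Hom, MvPolynomial.eval₂_X, Matrix.cons_val_zero,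
      Matrix.cons_val_one] at h1
    rw [← h1, mul_div_cancel_left₀ _ hα0]
  have hd : (Polynomial.eval₂ realToHyper (x + α) f - Polynomial.eval₂ realToHyper x f) / α
      - Polynomial.eval₂ realToHyper x (Polynomial.derivative f) = k * α := by
    rw [h]; field_simp; ring
  have hi : Infinitesimal (k * α) := by
    have h2 := (Hyperreal.isSt_st' hk).mul hα
    rwa [mul_zero] at h2
  rw [← hq, hd]
  exact ⟨hi, hi⟩
end
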